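/- Let S be a proper convex subset of the chambers of a hyperplane arrangement 𝓗 in general position in ℝ^d, with |S| = Σ_{i=0}^d C(k,i) for some real k ≥ d−1, where C(k,i) denotes the generalized binomial coefficient k(k−1)⋯(k−i+1)/i!. If the thickening T_S is bounded in ℝ^d, then |∂S| ≥ Σ_{i=0}^{d−1} (d−i+1)·C(k,i). -/

import Mathlib

open Set Topology

noncomputable section

/-- A hyperplane arrangement of `n` affine hyperplanes in `ℝ^d`, given by
nonzero normal vectors and offsets: the `i`-th hyperplane is
`{x | ∑ j, normal i j * x j = offset i}`. -/
structure Arrangement (d n : ℕ) where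
  normal : Fin n → (Fin d → ℝ)
  offset : Fin n → ℝ
  normal_ne : ∀ i, normal i ≠ 0

/-- The thickening (regular open hull) `T_S` of a set `S` of chambers. -/
def thickening {d : ℕ} (S : Set (Set (Fin d → ℝ))) : Set (Fin d → ℝ) :=
  interior (closure (⋃ C ∈ S, C))

/-- The set of connected components of a subset `X` of a topological space. -/
def connComps {α : Type*} [TopologicalSpace α] (X : Set α) : Set (Set α) :=
  {c | ∃ x ∈ X, c = connectedComponentIn X x}

namespace Arrangement

variable {d n : ℕ} (𝓗 : Arrangement d n)

/-- The `i`-th hyperplane of the arrangement. -/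
def H (i : Fin n) : Set (Fin d → ℝ) := {x | ∑ j, 𝓗.normal i j * x j = 𝓗.offset i}

/-- The positive open half-space determined by the `i`-th hyperplane. -/
def pos (i : Fin n) : Set (Fin d → ℝ) := {x | 𝓗.offset i < ∑ j, 𝓗.normal i j * x j}

/-- The negative open half-space determined by the `i`-th hyperplane. -/
def neg (i : Fin n) : Set (Fin d → ℝ) := {x | ∑ j, 𝓗.normal i j * x j < 𝓗.offset i}

/-- The complement of the union of the hyperplanes. -/
def free : Set (Fin d → ℝ) := {x | ∀ i, x ∉ 𝓗.H i}

/-- The chambers: connected components of the complement of the hyperplanes. -/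
def chambers : Set (Set (Fin d → ℝ)) :=
  {C | ∃ x ∈ 𝓗.free, C = connectedComponentIn 𝓗.free x}

/-- General position: the normals of any `≤ d` hyperplanes are linearly independent
(so that their intersection is an affine subspace of the right dimension), and no
`d+1` hyperplanes have a common point. -/
def GeneralPosition : Prop :=
  (∀ A : Finset (Fin n), A.card ≤ d →
      LinearIndependent ℝ (fun i : A => 𝓗.normal i.1)) ∧
  (∀ A : Finset (Fin n), A.card = d + 1 → (⋂ i ∈ A, 𝓗.H i) = ∅)

/-- Hyperplane `e` separates `C` from `C'`. -/
def Separates (e : Fin n) (C C' : Set (Fin d → ℝ)) : Prop :=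
  (C ⊆ 𝓗.pos e ∧ C' ⊆ 𝓗.neg e) ∨ (C ⊆ 𝓗.neg e ∧ C' ⊆ 𝓗.pos e)

/-- Adjacency in the chamber graph: two chambers are adjacent iff they are separated
by exactly one hyperplane (equivalently, share a common facet). -/
def Adj (C C' : Set (Fin d → ℝ)) : Prop :=
  C ∈ 𝓗.chambers ∧ C' ∈ 𝓗.chambers ∧ ∃! e : Fin n, 𝓗.Separates e C C'

/-- The edge boundary of a set `S` of chambers, encoded as the set of ordered pairs
`(C, C')` of adjacent chambers with `C ∈ S` and `C' ∉ S` (each boundary edge is thus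
counted exactly once). -/
def edgeBoundary (S : Set (Set (Fin d → ℝ))) :
    Set ((Set (Fin d → ℝ)) × (Set (Fin d → ℝ))) :=
  {q | q.1 ∈ S ∧ q.2 ∉ S ∧ 𝓗.Adj q.1 q.2}

/-- The stratum `T_S(A) = T_S ∩ L_A`. -/
def stratum (S : Set (Set (Fin d → ℝ))) (A : Finset (Fin n)) : Set (Fin d → ℝ) :=
  thickening S ∩ ⋂ i ∈ A, 𝓗.H i

/-- The support of `S`: those `A` with nonempty stratum. -/
def supp (S : Set (Set (Fin d → ℝ))) : Set (Finset (Fin n)) :=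
  {A | (𝓗.stratum S A).Nonempty}

/-- `H_f` bounds the stratum `T_S(A)`: the stratum lies entirely in one of the open
half-spaces of `H_f`, and `H_f` meets the closure of the stratum within `L_A`. -/
def Bounds (f : Fin n) (S : Set (Set (Fin d → ℝ))) (A : Finset (Fin n)) : Prop :=
  (𝓗.stratum S A ⊆ 𝓗.pos f ∨ 𝓗.stratum S A ⊆ 𝓗.neg f) ∧
  (𝓗.H f ∩ closure (𝓗.stratum S A) ∩ ⋂ i ∈ A, 𝓗.H i).Nonempty

/-- `S` is strata-connected if every nonempty stratum is connected. -/
def StrataConnected (S : Set (Set (Fin d → ℝ))) : Prop :=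
  ∀ A ∈ 𝓗.supp S, IsConnected (𝓗.stratum S A)

end Arrangement

/-- The generalized binomial coefficient `C(x, i) = x(x-1)⋯(x-i+1)/i!`. -/
noncomputable def gchoose (x : ℝ) (i : ℕ) : ℝ :=
  (∏ j ∈ Finset.range i, (x - j)) / (Nat.factorial i)


lemma gchoose_zero (x : ℝ) : gchoose x 0 = 1 := by simp [gchoose]

lemma gchoose_succ (x : ℝ) (i : ℕ) : gchoose x (i+1) = gchoose x i * (x - i) / (i+1) := by
  unfold gchoose
  rw [Finset.prod_range_succ, Nat.factorial_succ]
  push_cast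
  field_simp

lemma gchoose_succ' (x : ℝ) (i : ℕ) : gchoose x (i+1) = x / (i+1) * gchoose (x-1) i := by
  unfold gchoose
  rw [Finset.prod_range_succ', Nat.factorial_succ]
  push_cast
  have : ∀ j : ℕ, x - 1 - (j:ℝ) = x - (j+1) := by intro j; ring
  simp only [this]
  field_simp
  simp [mul_comm]

lemma gchoose_nonneg (x : ℝ) (i : ℕ) (h : (i:ℝ) - 1 ≤ x) : 0 ≤ gchoose x i := by
  unfold gchoose
  apply div_nonneg _ (by positivity)
  apply Finset.prod_nonneg
  intro j hj
  have : j + 1 ≤ i := by simpa using hj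
  have : (j:ℝ) + 1 ≤ i := by exact_mod_cast this
  linarith

lemma gchoose_self (i : ℕ) : gchoose (i:ℝ) i = 1 := by
  induction i with
  | zero => simp [gchoose]
  | succ i ih =>
    rw [gchoose_succ']
    push_cast
    rw [add_sub_cancel_right, ih]
    field_simp

lemma gchoose_cont (i : ℕ) : Continuous (fun x => gchoose x i) := by
  unfold gchoose
  fun_prop

lemma sum_filter_mem {α : Type*} [Fintype α] [DecidableEq α] (𝓐 : Finset (Finset α)) (r : ℕ)
    (h : ∀ a ∈ 𝓐, a.card = r) : ∑ v, (𝓐.filter (fun a => v ∈ a)).card = r * 𝓐.card := by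
  simp only [Finset.card_filter]
  rw [Finset.sum_comm]
  rw [Finset.sum_congr rfl (g := fun _ => r)]
  · simp [mul_comm]
  · intro a ha
    simp [h a ha]

theorem clique_bound {α : Type*} [Fintype α] [DecidableEq α] (r : ℕ) :
    ∀ (𝓐 𝓚 : Finset (Finset α)) (x : ℝ), (∀ a ∈ 𝓐, a.card = r + 1) →
    (∀ K ∈ 𝓚, K.card = r + 2) → (∀ K ∈ 𝓚, ∀ v ∈ K, K.erase v ∈ 𝓐) → (r + 1 : ℝ) ≤ x →
    (𝓐.card : ℝ) ≤ gchoose x (r+1) → (𝓚.card : ℝ) ≤ gchoose x (r+2) := by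
  induction r using Nat.strong_induction_on with
  | _ r ih =>
  intro 𝓐 𝓚 x hA hK hAK hx hcard
  have hr1 : (0:ℝ) < r + 1 := by positivity
  have key : ∀ v : α, ((𝓚.filter (fun a => v ∈ a)).card : ℝ) ≤
      (x / (r+1) - 1) * ((𝓐.filter (fun a => v ∈ a)).card : ℝ) := by
    intro v
    set Kv := 𝓚.filter (fun a => v ∈ a) with hKv
    set Av := 𝓐.filter (fun a => v ∈ a) with hAv
    have hinjK : (Kv.image (fun a => a.erase v)).card = Kv.card := by
      apply Finset.card_image_of_injOn
      intro a ha b hb hab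
      simp only [hKv, Finset.coe_filter, Set.mem_ofPred_eq] at ha hb
      rw [← Finset.insert_erase ha.2, ← Finset.insert_erase hb.2]
      simp only at hab
      rw [hab]
    have hinjA : (Av.image (fun a => a.erase v)).card = Av.card := by
      apply Finset.card_image_of_injOn
      intro a ha b hb hab
      simp only [hAv, Finset.coe_filter, Set.mem_ofPred_eq] at ha hb
      rw [← Finset.insert_erase ha.2, ← Finset.insert_erase hb.2]
      simp only at hab
      rw [hab]
    by_cases hd0 : Av.card = 0
    · have : Kv.card = 0 := by
        rw [Finset.card_eq_zero] at hd0 ⊢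
        rw [Finset.eq_empty_iff_forall_notMem] at hd0 ⊢
        intro K hKK
        simp only [hKv, Finset.mem_filter] at hKK
        have h1 : 1 < K.card := by rw [hK K hKK.1]; omega
        obtain ⟨u, hu, huv⟩ := Finset.exists_mem_ne h1 v
        apply hd0 (K.erase u)
        simp only [hAv, Finset.mem_filter]
        exact ⟨hAK K hKK.1 u hu, Finset.mem_erase.2 ⟨huv.symm, hKK.2⟩⟩
      rw [this, hd0]; simp
    by_cases hcase : gchoose (x-1) r ≤ (Av.card : ℝ)
    · have h1 : Kv.card + Av.card ≤ 𝓐.card := by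
        rw [← hinjK, ← Finset.card_union_of_disjoint]
        · apply Finset.card_le_card
          apply Finset.union_subset
          · intro a ha
            simp only [hKv, Finset.mem_image, Finset.mem_filter] at ha
            obtain ⟨K, ⟨h1, h2⟩, rfl⟩ := ha
            exact hAK K h1 v h2
          · exact Finset.filter_subset _ _
        · rw [Finset.disjoint_left]
          intro a ha hb
          simp only [hKv, Finset.mem_image, Finset.mem_filter] at ha
          obtain ⟨K, ⟨h1, h2⟩, rfl⟩ := ha
          simp only [hAv, Finset.mem_filter] at hb
          exact absurd hb.2 (Finset.notMem_erase _ _)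
      have h2 : (Kv.card : ℝ) + Av.card ≤ 𝓐.card := by exact_mod_cast h1
      rw [gchoose_succ'] at hcard
      have h3 : x / (r+1) * gchoose (x-1) r ≤ x / (r+1) * Av.card := by
        apply mul_le_mul_of_nonneg_left hcase
        apply div_nonneg <;> linarith
      linarith
    · push Not at hcase
      rcases r with _ | r
      · rw [gchoose_zero] at hcase
        exfalso
        have : Av.card < 1 := by exact_mod_cast hcase
        omega
      · have hiv : ∃ y ∈ Set.Icc ((r+1 : ℕ):ℝ) (x-1), gchoose y (r+1) = (Av.card : ℝ) := by
          have h1 : ((r+1 : ℕ):ℝ) ≤ x - 1 := by push_cast at hx ⊢; linarith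
          have := intermediate_value_Icc h1 ((gchoose_cont (r+1)).continuousOn)
          apply this
          constructor
          · simp only [gchoose_self]
            have : 1 ≤ Av.card := by omega
            exact_mod_cast this
          · exact hcase.le
        obtain ⟨y, ⟨hy1, hy2⟩, hy⟩ := hiv
        have := ih r (by omega) (Av.image (fun a => a.erase v)) (Kv.image (fun a => a.erase v)) y
          ?_ ?_ ?_ (by push_cast at hy1; linarith) (by rw [hinjA, hy])
        · rw [hinjK, gchoose_succ, hy] at this
          refine this.trans ?_
          rw [mul_div_assoc, mul_comm]
          apply mul_le_mul_of_nonneg_right _ (by positivity)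
          push_cast at hr1 ⊢
          rw [div_sub_one hr1.ne']
          apply div_le_div_of_nonneg_right _ hr1.le
          linarith
        · intro a ha
          simp only [hAv, Finset.mem_image, Finset.mem_filter] at ha
          obtain ⟨K, ⟨h1, h2⟩, rfl⟩ := ha
          rw [Finset.card_erase_of_mem h2, hA K h1]; omega
        · intro a ha
          simp only [hKv, Finset.mem_image, Finset.mem_filter] at ha
          obtain ⟨K, ⟨h1, h2⟩, rfl⟩ := ha
          rw [Finset.card_erase_of_mem h2, hK K h1]; omega
        · intro a ha u hu
          simp only [hKv, Finset.mem_image, Finset.mem_filter] at ha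
          obtain ⟨K, ⟨h1, h2⟩, rfl⟩ := ha
          rw [Finset.erase_right_comm]
          rw [Finset.mem_erase] at hu
          apply Finset.mem_image_of_mem
          simp only [hAv, Finset.mem_filter]
          exact ⟨hAK K h1 u hu.2, Finset.mem_erase.2 ⟨hu.1.symm, h2⟩⟩
  have hsum := Finset.sum_le_sum (fun v (_ : v ∈ Finset.univ) => key v)
  rw [← Finset.mul_sum] at hsum
  have e1 := sum_filter_mem 𝓚 _ hK
  have e2 := sum_filter_mem 𝓐 _ hA
  have e1' : (∑ v, ((𝓚.filter (fun a => v ∈ a)).card : ℝ)) = (r+2) * 𝓚.card := by exact_mod_cast e1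
  have e2' : (∑ v, ((𝓐.filter (fun a => v ∈ a)).card : ℝ)) = (r+1) * 𝓐.card := by exact_mod_cast e2
  rw [e1', e2'] at hsum
  rw [gchoose_succ, le_div_iff₀ (by positivity)]
  push_cast
  have e3 : (x / (r + 1) - 1) * ((r+1) * (𝓐.card:ℝ)) = (x - (r+1)) * 𝓐.card := by field_simp
  rw [e3] at hsum
  have := mul_le_mul_of_nonneg_left hcard (sub_nonneg.2 hx)
  linarith

lemma strong_shatter {α : Type*} [Fintype α] [DecidableEq α] (𝓔 : Finset (Finset α))
    (𝓖 : Finset (Finset α))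
    (h : ∀ A ∈ 𝓖, ∃ s, Disjoint s A ∧ ∀ t, t ⊆ A → s ∪ t ∈ 𝓔) : 𝓖.card ≤ 𝓔.card := by
  have h1 := Finset.card_le_card_shatterer (𝓔ᶜ)
  have h2 : Disjoint (𝓔ᶜ).shatterer (𝓖.image (fun A => Aᶜ)) := by
    rw [Finset.disjoint_left]
    intro B hB hB'
    obtain ⟨A, hA, rfl⟩ := Finset.mem_image.1 hB'
    obtain ⟨s, hs, hst⟩ := h A hA
    rw [Finset.mem_shatterer] at hB
    obtain ⟨u, hu, hus⟩ := hB (t := s) (by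
      rw [Finset.subset_compl_iff_disjoint_right]; exact hs)
    rw [Finset.mem_compl] at hu
    apply hu
    have : u = s ∪ (A ∩ u) := by
      rw [← hus]; ext a; simp only [Finset.mem_union, Finset.mem_inter, Finset.mem_compl]; tauto
    rw [this]
    exact hst _ Finset.inter_subset_left
  have h3 := Finset.card_le_univ ((𝓔ᶜ).shatterer ∪ (𝓖.image (fun A => Aᶜ)))
  rw [Finset.card_union_of_disjoint h2, Finset.card_image_of_injective _ compl_injective] at h3
  have h4 := Finset.card_compl_add_card 𝓔
  omega

/-- final combinatorial inequality -/
lemma final_comb {n d : ℕ} (𝓢 : Finset (Finset (Fin n))) (hlow : ∀ A ∈ 𝓢, ∀ B, B ⊆ A → B ∈ 𝓢)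
    (hd : ∀ A ∈ 𝓢, A.card ≤ d) (hne : ∅ ∈ 𝓢)
    (k : ℝ) (hk : (d : ℝ) - 1 ≤ k)
    (hcard : ∑ i ∈ Finset.range (d + 1), gchoose k i ≤ 𝓢.card) :
    (∑ i ∈ Finset.range d, ((d : ℝ) - i + 1) * gchoose k i) ≤
      ∑ A ∈ 𝓢.filter (fun A => A.card < d), ((d:ℝ) - A.card + 1) := by
  set f : ℕ → ℝ := fun i => ((𝓢.filter (fun A => A.card = i)).card : ℝ) with hf
  have hmap : ∀ A ∈ 𝓢, A.card ∈ Finset.range (d+1) := by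
    intro A hA; simpa [Nat.lt_succ_iff] using hd A hA
  have e1 : (𝓢.card : ℝ) = ∑ i ∈ Finset.range (d+1), f i := by
    rw [Finset.card_eq_sum_card_fiberwise hmap]; push_cast; rfl
  have e2 : ∑ A ∈ 𝓢.filter (fun A => A.card < d), ((d:ℝ) - A.card + 1)
      = ∑ i ∈ Finset.range d, ((d:ℝ) - i + 1) * f i := by
    rw [← Finset.sum_fiberwise_of_maps_to (t := Finset.range d) (g := Finset.card)]
    · apply Finset.sum_congr rfl
      intro i hi
      rw [Finset.mem_range] at hi
      have : ((𝓢.filter (fun A => A.card < d)).filter (fun A => A.card = i))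
          = 𝓢.filter (fun A => A.card = i) := by
        ext A; simp only [Finset.mem_filter]; constructor
        · tauto
        · rintro ⟨h1, h2⟩; exact ⟨⟨h1, h2 ▸ hi⟩, h2⟩
      rw [this, Finset.sum_congr rfl (g := fun _ => (d:ℝ) - i + 1)]
      · rw [Finset.sum_const, nsmul_eq_mul, mul_comm]
      · intro A hA; rw [(Finset.mem_filter.1 hA).2]
    · intro A hA; simpa using (Finset.mem_filter.1 hA).2
  rw [e2]
  rw [e1] at hcard
  have hstep : ∀ i, 1 ≤ i → i < d → f i ≤ gchoose k i → f (i+1) ≤ gchoose k (i+1) := by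
    intro i hi hid h
    obtain ⟨r, rfl⟩ : ∃ r, i = r + 1 := ⟨i-1, by omega⟩
    refine clique_bound r _ _ k ?_ ?_ ?_ ?_ h
    · intro a ha; exact (Finset.mem_filter.1 ha).2
    · intro a ha; exact (Finset.mem_filter.1 ha).2
    · intro K hK v hv
      rw [Finset.mem_filter] at hK ⊢
      refine ⟨hlow K hK.1 _ (Finset.erase_subset _ _), ?_⟩
      rw [Finset.card_erase_of_mem hv, hK.2]; omega
    · have : ((r+1+1 : ℕ):ℝ) ≤ d := by exact_mod_cast hid
      push_cast at this; linarith
  have hf0 : f 0 = gchoose k 0 := by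
    rw [gchoose_zero]
    have : 𝓢.filter (fun A => A.card = 0) = {∅} := by
      ext A; simp only [Finset.mem_filter, Finset.card_eq_zero, Finset.mem_singleton]
      constructor
      · tauto
      · rintro rfl; exact ⟨hne, rfl⟩
    simp only [hf, this]; simp
  by_cases hall : ∃ j, 1 ≤ j ∧ j ≤ d ∧ f j ≤ gchoose k j
  · classical
    set j := Nat.find hall with hj
    obtain ⟨hj1, hjd, hjf⟩ := Nat.find_spec hall
    have hmin : ∀ i, i < j → gchoose k i ≤ f i := by
      intro i hi
      rcases Nat.eq_zero_or_pos i with h0 | h0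
      · rw [h0, hf0]
      · by_contra hcon
        exact Nat.find_min hall hi ⟨h0, by omega, by linarith⟩
    have hmax : ∀ i, j ≤ i → i ≤ d → f i ≤ gchoose k i := by
      intro i hi
      induction i, hi using Nat.le_induction with
      | base => intro _; exact hjf
      | succ i hi ih => intro hid; exact hstep i (by omega) (by omega) (ih (by omega))
    set w : ℕ → ℝ := fun i => if i < d then (d:ℝ) - i + 1 else 0 with hw
    have hwanti : ∀ a b, a ≤ b → w b ≤ w a := by
      intro a b hab
      have hab' : (a:ℝ) ≤ b := by exact_mod_cast hab
      simp only [hw]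
      split_ifs with h1 h2 h2
      · linarith
      · omega
      · have : (a:ℝ) < d := by exact_mod_cast h2
        linarith
      · exact le_rfl
    have hw0 : 0 ≤ w j := by
      have := hwanti j (max j d) (le_max_left _ _)
      have h2 : w (max j d) = 0 := by simp [hw]
      linarith
    have h1 : ∀ i ∈ Finset.range (d+1), w j * (f i - gchoose k i) ≤ w i * (f i - gchoose k i) := by
      intro i hi
      rw [Finset.mem_range] at hi
      rcases lt_or_ge i j with h | h
      · exact mul_le_mul_of_nonneg_right (hwanti _ _ h.le) (sub_nonneg.2 (hmin i h))
      · exact mul_le_mul_of_nonpos_right (hwanti _ _ h) (sub_nonpos.2 (hmax i h (by omega)))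
    have h2 := Finset.sum_le_sum h1
    rw [← Finset.mul_sum, Finset.sum_sub_distrib] at h2
    have h3 := mul_nonneg hw0 (sub_nonneg.2 hcard)
    have h4 := h3.trans h2
    rw [Finset.sum_range_succ] at h4
    have h5 : w d = 0 := by simp [hw]
    rw [h5, zero_mul, add_zero] at h4
    have h6 : ∑ i ∈ Finset.range d, w i * (f i - gchoose k i) =
        ∑ i ∈ Finset.range d, ((d:ℝ) - i + 1) * f i -
        ∑ i ∈ Finset.range d, ((d:ℝ) - i + 1) * gchoose k i := by
      rw [← Finset.sum_sub_distrib]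
      apply Finset.sum_congr rfl
      intro i hi
      have : i < d := by simpa using hi
      simp only [hw, this, if_true]; ring
    linarith
  · push Not at hall
    apply Finset.sum_le_sum
    intro i hi
    have hid : i < d := by simpa using hi
    have hid' : (i:ℝ) < d := by exact_mod_cast hid
    apply mul_le_mul_of_nonneg_left _ (by linarith)
    rcases Nat.eq_zero_or_pos i with h0 | h0
    · rw [h0, hf0]
    · exact (hall i h0 hid.le).le

namespace Arrangement

variable {d n : ℕ} (𝓗 : Arrangement d n)

def L (i : Fin n) : (Fin d → ℝ) →ₗ[ℝ] ℝ where
  toFun x := ∑ j, 𝓗.normal i j * x j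
  map_add' x y := by simp [mul_add, Finset.sum_add_distrib]
  map_smul' c x := by
    simp only [Pi.smul_apply, smul_eq_mul, RingHom.id_apply, Finset.mul_sum]
    apply Finset.sum_congr rfl; intros; ring

lemma L_cont (i : Fin n) : Continuous (𝓗.L i) := LinearMap.continuous_of_finiteDimensional _

open Classical in
def P (x : Fin d → ℝ) : Finset (Fin n) := Finset.univ.filter (fun i => 𝓗.offset i < 𝓗.L i x)

lemma mem_P (x : Fin d → ℝ) (i : Fin n) : i ∈ 𝓗.P x ↔ 𝓗.offset i < 𝓗.L i x := by simp [P]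

lemma mem_free (x : Fin d → ℝ) : x ∈ 𝓗.free ↔ ∀ i, 𝓗.L i x ≠ 𝓗.offset i := Iff.rfl
lemma mem_H (x : Fin d → ℝ) (i : Fin n) : x ∈ 𝓗.H i ↔ 𝓗.L i x = 𝓗.offset i := Iff.rfl
lemma mem_pos (x : Fin d → ℝ) (i : Fin n) : x ∈ 𝓗.pos i ↔ 𝓗.offset i < 𝓗.L i x := Iff.rfl
lemma mem_neg (x : Fin d → ℝ) (i : Fin n) : x ∈ 𝓗.neg i ↔ 𝓗.L i x < 𝓗.offset i := Iff.rfl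

lemma solve (hgp : 𝓗.GeneralPosition) (A : Finset (Fin n)) (hA : A.card ≤ d) (c : Fin n → ℝ) :
    ∃ w, ∀ a ∈ A, 𝓗.L a w = c a := by
  have hli := hgp.1 A hA
  set M : Matrix A (Fin d) ℝ := Matrix.of (fun (i : A) => 𝓗.normal i.1) with hM
  have hr : M.rank = Fintype.card A := LinearIndependent.rank_matrix (M := M) hli
  have htop : LinearMap.range M.mulVecLin = ⊤ := by
    apply Submodule.eq_top_of_finrank_eq
    rw [← Matrix.rank, hr]; simp
  obtain ⟨w, hw⟩ := LinearMap.range_eq_top.1 htop (fun a => c a.1)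
  refine ⟨w, fun a ha => ?_⟩
  have := congrFun hw ⟨a, ha⟩
  simpa [Matrix.mulVec, dotProduct, hM, L] using this

lemma exists_ker (A : Finset (Fin n)) (hA : A.card < d) :
    ∃ w, w ≠ 0 ∧ ∀ a ∈ A, 𝓗.L a w = 0 := by
  set Φ : (Fin d → ℝ) →ₗ[ℝ] (A → ℝ) := LinearMap.pi (fun a : A => 𝓗.L a.1) with hΦ
  have : LinearMap.ker Φ ≠ ⊥ := LinearMap.ker_ne_bot_of_finrank_lt (by simpa using hA)
  obtain ⟨w, hw, hw0⟩ := Submodule.exists_mem_ne_zero_of_ne_bot this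
  refine ⟨w, hw0, fun a ha => ?_⟩
  exact congrFun (LinearMap.mem_ker.1 hw) ⟨a, ha⟩

lemma free_isOpen : IsOpen 𝓗.free := by
  have : 𝓗.free = ⋂ i, {x | 𝓗.L i x ≠ 𝓗.offset i} := by
    ext x; simp [mem_free]
  rw [this]
  exact isOpen_iInter_of_finite fun i => isOpen_ne_fun (𝓗.L_cont i) continuous_const

lemma comp_subset {x : Fin d → ℝ} (hx : x ∈ 𝓗.free) (i : Fin n) :
    (𝓗.offset i < 𝓗.L i x → connectedComponentIn 𝓗.free x ⊆ 𝓗.pos i) ∧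
    (𝓗.L i x < 𝓗.offset i → connectedComponentIn 𝓗.free x ⊆ 𝓗.neg i) := by
  have hpre : IsPreconnected (connectedComponentIn 𝓗.free x) := isPreconnected_connectedComponentIn
  have hmem := mem_connectedComponentIn hx
  have hsub := connectedComponentIn_subset 𝓗.free x
  have key : ∀ y ∈ connectedComponentIn 𝓗.free x, ∀ z ∈ connectedComponentIn 𝓗.free x,
      𝓗.L i y < 𝓗.offset i → 𝓗.offset i < 𝓗.L i z → False := by
    intro y hy z hz h1 h2
    obtain ⟨u, hu, hu'⟩ := hpre.intermediate_value hy hz (𝓗.L_cont i).continuousOn ⟨h1.le, h2.le⟩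
    exact (𝓗.mem_free u).1 (hsub hu) i hu'
  constructor
  · intro h y hy
    rcases lt_or_gt_of_ne ((𝓗.mem_free y).1 (hsub hy) i) with h1 | h1
    · exact (key y hy x hmem h1 h).elim
    · exact h1
  · intro h y hy
    rcases lt_or_gt_of_ne ((𝓗.mem_free y).1 (hsub hy) i) with h1 | h1
    · exact h1
    · exact (key x hmem y hy h h1).elim

lemma P_eq_of_mem {x y : Fin d → ℝ} (hx : x ∈ 𝓗.free) (hy : y ∈ connectedComponentIn 𝓗.free x) :
    𝓗.P y = 𝓗.P x := by
  ext i
  rw [mem_P, mem_P]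
  rcases lt_or_gt_of_ne ((𝓗.mem_free x).1 hx i) with h | h
  · have h1 : 𝓗.L i y < 𝓗.offset i := (𝓗.comp_subset hx i).2 h hy
    exact ⟨fun h' => absurd h' h1.not_gt, fun h' => absurd h' h.not_gt⟩
  · have h1 : 𝓗.offset i < 𝓗.L i y := (𝓗.comp_subset hx i).1 h hy
    exact ⟨fun _ => h, fun _ => h1⟩

lemma comp_eq_of_P {x y : Fin d → ℝ} (hx : x ∈ 𝓗.free) (hy : y ∈ 𝓗.free) (h : 𝓗.P x = 𝓗.P y) :
    connectedComponentIn 𝓗.free x = connectedComponentIn 𝓗.free y := by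
  apply connectedComponentIn_eq
  have hseg : segment ℝ x y ⊆ 𝓗.free := by
    rintro z ⟨a, b, ha, hb, hab, rfl⟩ i
    rw [mem_H]
    have hi : 𝓗.offset i < 𝓗.L i x ↔ 𝓗.offset i < 𝓗.L i y := by rw [← mem_P, ← mem_P, h]
    rw [map_add, map_smul, map_smul, smul_eq_mul, smul_eq_mul]
    have hb' : b = 1 - a := by linarith
    subst hb'
    rcases lt_or_gt_of_ne ((𝓗.mem_free x).1 hx i) with h1 | h1
    · have h2 : 𝓗.L i y < 𝓗.offset i :=
        lt_of_le_of_ne (not_lt.1 fun h' => absurd (hi.2 h') h1.not_gt) ((𝓗.mem_free y).1 hy i)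
      intro h3
      rcases eq_or_lt_of_le ha with rfl | ha'
      · simp at h3; linarith
      · nlinarith
    · have h2 := hi.1 h1
      intro h3
      rcases eq_or_lt_of_le ha with rfl | ha'
      · simp at h3; linarith
      · nlinarith
  exact (convex_segment x y).isPreconnected.subset_connectedComponentIn (left_mem_segment ℝ x y)
    hseg (right_mem_segment ℝ x y)

lemma mem_thick {S : Set (Set (Fin d → ℝ))} (hS : S ⊆ 𝓗.chambers) {x : Fin d → ℝ}
    (hx : x ∈ 𝓗.free) : x ∈ thickening S ↔ connectedComponentIn 𝓗.free x ∈ S := by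
  have hopen : IsOpen (connectedComponentIn 𝓗.free x) := 𝓗.free_isOpen.connectedComponentIn
  constructor
  · intro h
    have h1 : x ∈ closure (⋃ C ∈ S, C) := interior_subset h
    obtain ⟨y, hy, hy'⟩ := mem_closure_iff.1 h1 _ hopen (mem_connectedComponentIn hx)
    simp only [Set.mem_iUnion] at hy'
    obtain ⟨C, hC, hyC⟩ := hy'
    obtain ⟨z, hz, rfl⟩ := hS hC
    have e1 := connectedComponentIn_eq hy
    have e2 := connectedComponentIn_eq hyC
    rw [e1, ← e2]; exact hC
  · intro h
    apply mem_interior.2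
    refine ⟨connectedComponentIn 𝓗.free x, ?_, hopen, mem_connectedComponentIn hx⟩
    refine Set.Subset.trans ?_ subset_closure
    exact Set.subset_biUnion_of_mem (u := fun C => C) h

lemma near (q w : Fin d → ℝ) : ∀ᶠ ε in 𝓝[>] (0:ℝ), ∀ i,
    (𝓗.L i q ≠ 𝓗.offset i → (𝓗.L i (q + ε • w) ≠ 𝓗.offset i ∧
      (𝓗.offset i < 𝓗.L i (q + ε • w) ↔ 𝓗.offset i < 𝓗.L i q))) ∧
    (𝓗.L i q = 𝓗.offset i → 𝓗.L i w ≠ 0 → (𝓗.L i (q + ε • w) ≠ 𝓗.offset i ∧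
      (𝓗.offset i < 𝓗.L i (q + ε • w) ↔ 0 < 𝓗.L i w))) := by
  rw [Filter.eventually_all]
  intro i
  have hc : Continuous (fun ε : ℝ => 𝓗.L i (q + ε • w)) := (𝓗.L_cont i).comp (by fun_prop)
  have h0 : 𝓗.L i (q + (0:ℝ) • w) = 𝓗.L i q := by simp
  by_cases hq : 𝓗.L i q = 𝓗.offset i
  · filter_upwards [self_mem_nhdsWithin] with ε hε
    have hε' : 0 < ε := hε
    refine ⟨fun h => absurd hq h, fun _ hw => ?_⟩
    rw [map_add, map_smul, hq, smul_eq_mul]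
    constructor
    · intro h; have : ε * 𝓗.L i w = 0 := by linarith
      rcases mul_eq_zero.1 this with h | h
      · exact hε'.ne' h
      · exact hw h
    · rw [lt_add_iff_pos_right, mul_pos_iff_of_pos_left hε']
  · rcases lt_or_gt_of_ne hq with h | h
    · have : ∀ᶠ ε in 𝓝 (0:ℝ), 𝓗.L i (q + ε • w) < 𝓗.offset i := by
        apply hc.continuousAt.eventually_lt continuousAt_const
        simpa using h
      filter_upwards [nhdsWithin_le_nhds this] with ε hε
      refine ⟨fun _ => ⟨hε.ne, ?_⟩, fun h' => absurd h' hq⟩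
      exact ⟨fun h' => absurd h' hε.not_gt, fun h' => absurd h' h.not_gt⟩
    · have : ∀ᶠ ε in 𝓝 (0:ℝ), 𝓗.offset i < 𝓗.L i (q + ε • w) := by
        apply continuousAt_const.eventually_lt hc.continuousAt
        simpa using h
      filter_upwards [nhdsWithin_le_nhds this] with ε hε
      exact ⟨fun _ => ⟨hε.ne', ⟨fun _ => h, fun _ => hε⟩⟩, fun h' => absurd h' hq⟩

end Arrangement

lemma near_open {E : Type*} [AddCommGroup E] [Module ℝ E] [TopologicalSpace E]
    [ContinuousAdd E] [ContinuousSMul ℝ E] {U : Set E} (hU : IsOpen U) {q : E} (hq : q ∈ U)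
    (w : E) : ∀ᶠ ε in 𝓝 (0:ℝ), q + ε • w ∈ U := by
  have hc : Continuous (fun ε : ℝ => q + ε • w) := by fun_prop
  apply hc.continuousAt.eventually_mem
  apply hU.mem_nhds
  simpa using hq

lemma avoid {d : ℕ} {ι : Type*} (F : Finset ι) (ℓ : ι → (Fin d → ℝ) →ₗ[ℝ] ℝ) (c : ι → ℝ)
    (W : Submodule ℝ (Fin d → ℝ)) (U : Set (Fin d → ℝ)) (hU : IsOpen U) (x0 : Fin d → ℝ)
    (hx0 : x0 ∈ U) (h : ∀ i ∈ F, ∃ w ∈ W, ℓ i w ≠ 0) :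
    ∃ x ∈ U, x - x0 ∈ W ∧ ∀ i ∈ F, ℓ i x ≠ c i := by
  classical
  induction F using Finset.induction_on with
  | empty => exact ⟨x0, hx0, by simp, by simp⟩
  | insert i F hi ih =>
    obtain ⟨x, hxU, hxW, hx⟩ := ih (fun j hj => h j (Finset.mem_insert_of_mem hj))
    obtain ⟨w, hw, hlw⟩ := h i (Finset.mem_insert_self _ _)
    have h1 : ∀ᶠ ε in 𝓝[≠] (0:ℝ), x + ε • w ∈ U := nhdsWithin_le_nhds (near_open hU hxU w)
    have h2 : ∀ᶠ ε in 𝓝[≠] (0:ℝ), ∀ j ∈ F, ℓ j (x + ε • w) ≠ c j := by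
      rw [Filter.eventually_all_finset]
      intro j hj
      have hop : IsOpen {y | ℓ j y ≠ c j} :=
        isOpen_ne_fun (LinearMap.continuous_of_finiteDimensional _) continuous_const
      exact nhdsWithin_le_nhds (near_open hop (hx j hj) w)
    have h3 : ∀ᶠ ε in 𝓝[≠] (0:ℝ), ℓ i (x + ε • w) ≠ c i := by
      by_cases hc : ℓ i x = c i
      · filter_upwards [self_mem_nhdsWithin] with ε hε
        rw [map_add, map_smul, hc, smul_eq_mul]
        have : ε ≠ 0 := hε
        have := mul_ne_zero this hlw
        intro h; apply this; linarith
      · have hop : IsOpen {y | ℓ i y ≠ c i} :=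
          isOpen_ne_fun (LinearMap.continuous_of_finiteDimensional _) continuous_const
        exact nhdsWithin_le_nhds (near_open hop hc w)
    obtain ⟨ε, h1, h2, h3⟩ := (h1.and (h2.and h3)).exists
    refine ⟨x + ε • w, h1, ?_, ?_⟩
    · have : x + ε • w - x0 = (x - x0) + ε • w := by abel
      rw [this]; exact W.add_mem hxW (W.smul_mem _ hw)
    · intro j hj
      rcases Finset.mem_insert.1 hj with rfl | hj
      · exact h3
      · exact h2 j hj

namespace Arrangement

variable {d n : ℕ} (𝓗 : Arrangement d n)

open Classical in
def E (T : Set (Fin d → ℝ)) (f : Fin n) : Finset (Finset (Fin n)) :=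
  Finset.univ.filter (fun s => ∃ x y, x ∈ 𝓗.free ∧ y ∈ 𝓗.free ∧ x ∈ T ∧ y ∉ T ∧
    (𝓗.P x).erase f = s ∧ (𝓗.P y).erase f = s ∧ ¬ (f ∈ 𝓗.P x ↔ f ∈ 𝓗.P y))

def Good (T : Set (Fin d → ℝ)) (f : Fin n) (A : Finset (Fin n)) : Prop :=
  ∃ s, Disjoint s A ∧ ∀ t, t ⊆ A → s ∪ t ∈ 𝓗.E T f

lemma Good.notMem {T : Set (Fin d → ℝ)} {f : Fin n} {A : Finset (Fin n)} (h : 𝓗.Good T f A) :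
    f ∉ A := by
  intro hf
  obtain ⟨s, -, hs⟩ := h
  have := hs {f} (by simpa using hf)
  simp only [E, Finset.mem_filter] at this
  obtain ⟨-, x, y, -, -, -, -, h1, -⟩ := this
  have : f ∈ (𝓗.P x).erase f := by rw [h1]; simp
  exact absurd this (Finset.notMem_erase _ _)

/-- a point of a stratum whose hyperplanes are exactly those of `A` -/
lemma exists_generic (hgp : 𝓗.GeneralPosition) (T : Set (Fin d → ℝ)) (hT : IsOpen T)
    (A : Finset (Fin n)) (hA : A.card < d) (p0 : Fin d → ℝ) (hp0 : p0 ∈ T)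
    (hp0A : ∀ a ∈ A, 𝓗.L a p0 = 𝓗.offset a) :
    ∃ p ∈ T, (∀ a ∈ A, 𝓗.L a p = 𝓗.offset a) ∧ ∀ f, f ∉ A → 𝓗.L f p ≠ 𝓗.offset f := by
  classical
  set W : Submodule ℝ (Fin d → ℝ) := ⨅ a ∈ A, LinearMap.ker (𝓗.L a) with hW
  have hWm : ∀ w, w ∈ W ↔ ∀ a ∈ A, 𝓗.L a w = 0 := by intro w; simp [hW]
  obtain ⟨p, hpT, hpW, hp⟩ := avoid (Aᶜ) 𝓗.L 𝓗.offset W T hT p0 hp0 (by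
    intro f hf
    rw [Finset.mem_compl] at hf
    obtain ⟨w, hw⟩ := 𝓗.solve hgp (insert f A) (by rw [Finset.card_insert_of_notMem hf]; omega)
      (fun i => if i = f then 1 else 0)
    refine ⟨w, (hWm w).2 fun a ha => ?_, ?_⟩
    · rw [hw a (Finset.mem_insert_of_mem ha), if_neg]
      rintro rfl; exact hf ha
    · rw [hw f (Finset.mem_insert_self _ _)]; simp)
  refine ⟨p, hpT, fun a ha => ?_, fun f hf => hp f (Finset.mem_compl.2 hf)⟩
  have := (hWm _).1 hpW a ha
  rw [map_sub, hp0A a ha] at this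
  linarith

lemma exists_dir (hgp : 𝓗.GeneralPosition)
    (A B : Finset (Fin n)) (hA : A.card < d) (hAB : A.card + B.card ≤ d) (hdisj : Disjoint A B)
    (p : Fin d → ℝ) (hpA : ∀ a ∈ A, 𝓗.L a p = 𝓗.offset a)
    (hp : ∀ f, f ∉ A → 𝓗.L f p ≠ 𝓗.offset f) :
    ∃ v, v ≠ 0 ∧ (∀ a ∈ A, 𝓗.L a v = 0) ∧
      (∀ b ∈ B, 0 < (𝓗.L b p - 𝓗.offset b) * 𝓗.L b v) ∧
      ∀ f g, f ∉ A → g ∉ A → f ≠ g →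
        (𝓗.offset f - 𝓗.L f p) * 𝓗.L g v ≠ (𝓗.offset g - 𝓗.L g p) * 𝓗.L f v := by
  classical
  set W : Submodule ℝ (Fin d → ℝ) := ⨅ a ∈ A, LinearMap.ker (𝓗.L a) with hW
  have hWm : ∀ w, w ∈ W ↔ ∀ a ∈ A, 𝓗.L a w = 0 := by intro w; simp [hW]
  have hBA : ∀ b ∈ B, b ∉ A := fun b hb hb' => Finset.disjoint_left.1 hdisj hb' hb
  have hv0 : ∃ v0, v0 ≠ 0 ∧ v0 ∈ W ∧ ∀ b ∈ B, 0 < (𝓗.L b p - 𝓗.offset b) * 𝓗.L b v0 := by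
    rcases B.eq_empty_or_nonempty with rfl | ⟨b, hb⟩
    · obtain ⟨w, hw, hw'⟩ := 𝓗.exists_ker A hA
      exact ⟨w, hw, (hWm w).2 hw', by simp⟩
    · obtain ⟨w, hw⟩ := 𝓗.solve hgp (A ∪ B) ((Finset.card_union_le _ _).trans hAB)
        (fun i => 𝓗.L i p - 𝓗.offset i)
      have hpos : ∀ b ∈ B, 0 < (𝓗.L b p - 𝓗.offset b) * 𝓗.L b w := by
        intro b hb
        rw [hw b (Finset.mem_union_right _ hb)]
        exact mul_self_pos.2 (sub_ne_zero.2 (hp b (hBA b hb)))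
      refine ⟨w, ?_, (hWm w).2 ?_, hpos⟩
      · rintro rfl
        have := hpos b hb
        simp at this
      · intro a ha
        rw [hw a (Finset.mem_union_left _ ha), hpA a ha, sub_self]
  obtain ⟨v0, hv0, hv0W, hv0B⟩ := hv0
  set U : Set (Fin d → ℝ) := {v | v ≠ 0} ∩ ⋂ b ∈ B, {v | 0 < (𝓗.L b p - 𝓗.offset b) * 𝓗.L b v}
    with hU
  have hUo : IsOpen U := by
    apply IsOpen.inter isOpen_ne
    apply isOpen_biInter_finset
    intro b _
    exact isOpen_lt continuous_const (continuous_const.mul (𝓗.L_cont b))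
  obtain ⟨v, hvU, hvW, hv⟩ := avoid
    (Finset.univ.filter (fun q : Fin n × Fin n => q.1 ∉ A ∧ q.2 ∉ A ∧ q.1 ≠ q.2))
    (fun q => (𝓗.offset q.1 - 𝓗.L q.1 p) • 𝓗.L q.2 - (𝓗.offset q.2 - 𝓗.L q.2 p) • 𝓗.L q.1)
    (fun _ => 0) W U hUo v0 (by
      refine ⟨hv0, ?_⟩
      simp only [Set.mem_iInter]
      exact hv0B) (by
      rintro ⟨f, g⟩ hfg
      simp only [Finset.mem_filter, Finset.mem_univ, true_and] at hfg
      obtain ⟨hf, hg, hfg⟩ := hfg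
      by_cases hd : A.card + 2 ≤ d
      · obtain ⟨w, hw⟩ := 𝓗.solve hgp (insert g (insert f A)) (by
          rw [Finset.card_insert_of_notMem, Finset.card_insert_of_notMem hf]; omega
          simp [hg, Ne.symm hfg]) (fun i => if i = f then 1 else 0)
        refine ⟨w, (hWm w).2 fun a ha => ?_, ?_⟩
        · rw [hw a (by simp [ha]), if_neg]
          rintro rfl; exact hf ha
        · simp only [LinearMap.sub_apply, LinearMap.smul_apply, smul_eq_mul]
          rw [hw f (by simp), hw g (by simp)]
          simp only [Ne.symm hfg, if_false, if_true]
          intro h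
          apply hp g hg
          linarith
      · obtain ⟨w, hw⟩ := 𝓗.solve hgp (insert f A) (by
          rw [Finset.card_insert_of_notMem hf]; omega) (fun i => if i = f then 1 else 0)
        have hwA : ∀ a ∈ A, 𝓗.L a w = 0 := by
          intro a ha
          rw [hw a (by simp [ha]), if_neg]
          rintro rfl; exact hf ha
        have hwf : 𝓗.L f w = 1 := by rw [hw f (by simp)]; simp
        refine ⟨w, (hWm w).2 hwA, ?_⟩
        simp only [LinearMap.sub_apply, LinearMap.smul_apply, smul_eq_mul]
        rw [hwf]
        intro h
        have hemp := hgp.2 (insert g (insert f A)) (by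
          rw [Finset.card_insert_of_notMem, Finset.card_insert_of_notMem hf]; omega
          simp [hg, Ne.symm hfg])
        have : p + (𝓗.offset f - 𝓗.L f p) • w ∈ ⋂ i ∈ insert g (insert f A), 𝓗.H i := by
          simp only [Set.mem_iInter, mem_H, Finset.mem_insert, map_add, map_smul, smul_eq_mul]
          rintro i (rfl | rfl | hi)
          · linarith
          · rw [hwf]; ring
          · rw [hwA i hi, hpA i hi]; ring
        rw [hemp] at this
        exact this)
  have hvW' : v ∈ W := by
    have := W.add_mem hvW hv0W
    simpa using this
  refine ⟨v, hvU.1, (hWm v).1 hvW', ?_, ?_⟩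
  · have := hvU.2
    simp only [Set.mem_iInter] at this
    exact this
  · intro f g hf hg hfg h
    apply hv (f, g) (by simp [hf, hg, hfg])
    simp only [LinearMap.sub_apply, LinearMap.smul_apply, smul_eq_mul]
    linarith

lemma exists_exit {T : Set (Fin d → ℝ)} (hT : IsOpen T) (hb : Bornology.IsBounded T)
    {p v : Fin d → ℝ} (hp : p ∈ T) (hv : v ≠ 0) :
    ∃ τ : ℝ, 0 < τ ∧ p + τ • v ∉ T ∧ ∀ t, 0 ≤ t → t < τ → p + t • v ∈ T := by
  set I : Set ℝ := {t | 0 ≤ t ∧ p + t • v ∉ T} with hI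
  have hcl : IsClosed I := by
    apply IsClosed.inter (isClosed_le continuous_const continuous_id)
    have : Continuous (fun t : ℝ => p + t • v) := by fun_prop
    exact (hT.preimage this).isClosed_compl
  have hne : I.Nonempty := by
    obtain ⟨R, hR⟩ := hb.subset_closedBall p
    have hvn : 0 < ‖v‖ := norm_pos_iff.2 hv
    refine ⟨(|R| + 1) / ‖v‖, by positivity, fun h => ?_⟩
    have h1 := hR h
    rw [Metric.mem_closedBall, dist_eq_norm, add_sub_cancel_left, norm_smul, Real.norm_eq_abs,
      abs_of_nonneg (by positivity), div_mul_cancel₀ _ hvn.ne'] at h1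
    have := le_abs_self R
    linarith
  have hbd : BddBelow I := ⟨0, fun t ht => ht.1⟩
  have hmem := hcl.csInf_mem hne hbd
  refine ⟨sInf I, ?_, hmem.2, ?_⟩
  · rcases eq_or_lt_of_le hmem.1 with h | h
    · exfalso
      have := hmem.2
      rw [← h] at this
      simp [hp] at this
    · exact h
  · intro t ht htI
    by_contra hcon
    exact absurd (csInf_le hbd (show t ∈ I from ⟨ht, hcon⟩)) (not_le.2 htI)

lemma exit_good (hgp : 𝓗.GeneralPosition) (T : Set (Fin d → ℝ)) (hT : IsOpen T)
    (hconv : Convex ℝ T) (hb : Bornology.IsBounded T)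
    (hP : ∀ x ∈ 𝓗.free, ∀ y ∈ 𝓗.free, 𝓗.P x = 𝓗.P y → x ∈ T → y ∈ T)
    (A B : Finset (Fin n)) (hA : A.card < d) (hAB : A.card + B.card ≤ d) (hdisj : Disjoint A B)
    (p0 : Fin d → ℝ) (hp0 : p0 ∈ T) (hp0A : ∀ a ∈ A, 𝓗.L a p0 = 𝓗.offset a) :
    ∃ f, f ∉ B ∧ 𝓗.Good T f A := by
  classical
  obtain ⟨p, hpT, hpA, hp⟩ := 𝓗.exists_generic hgp T hT A hA p0 hp0 hp0A
  obtain ⟨v, hv0, hvA, hvB, hvfg⟩ := 𝓗.exists_dir hgp A B hA hAB hdisj p hpA hp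
  obtain ⟨τ, hτ, hqT, hbefore⟩ := exists_exit hT hb hpT hv0
  set q := p + τ • v with hq
  have hLq : ∀ i, 𝓗.L i q = 𝓗.L i p + τ * 𝓗.L i v := by
    intro i; rw [hq, map_add, map_smul, smul_eq_mul]
  have hqA : ∀ a ∈ A, 𝓗.L a q = 𝓗.offset a := by
    intro a ha; rw [hLq, hvA a ha, hpA a ha]; ring
  have hvne : ∀ f, f ∉ A → 𝓗.L f q = 𝓗.offset f → 𝓗.L f v ≠ 0 := by
    intro f hf hfq h
    rw [hLq, h] at hfq
    apply hp f hf; linarith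
  -- key claim
  have key : ∀ w, (∀ i, 𝓗.L i q = 𝓗.offset i → 𝓗.L i w ≠ 0) →
      (∀ f, f ∉ A → 𝓗.L f q = 𝓗.offset f → 𝓗.L f w * 𝓗.L f v < 0) →
      ∀ᶠ ε in 𝓝[>] (0:ℝ), q + ε • w ∈ T := by
    intro w hw1 hw2
    have hlt : ∀ᶠ δ in 𝓝[>] (0:ℝ), δ < τ := nhdsWithin_le_nhds (gt_mem_nhds hτ)
    have hposδ : ∀ᶠ δ in 𝓝[>] (0:ℝ), 0 < δ := self_mem_nhdsWithin
    obtain ⟨δ, hδ1, hδ2, hδ3⟩ := ((𝓗.near q (-v)).and (hlt.and hposδ)).exists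
    set z := q + δ • (-v) with hz
    have hzT : z ∈ T := by
      have := hbefore (τ - δ) (by linarith) (by linarith)
      have e : z = p + (τ - δ) • v := by rw [hz, hq, sub_smul, smul_neg]; abel
      rw [e]; exact this
    have hzA : ∀ a ∈ A, 𝓗.L a z = 𝓗.offset a := by
      intro a ha; rw [hz, map_add, map_smul, map_neg, hvA a ha, hqA a ha]; simp
    filter_upwards [𝓗.near q w, 𝓗.near z w, nhdsWithin_le_nhds (near_open hT hzT w)]
      with ε h1 h2 h3
    have hcomb : ∀ i, 𝓗.L i (q + ε • w) ≠ 𝓗.offset i ∧ 𝓗.L i (z + ε • w) ≠ 𝓗.offset i ∧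
        (𝓗.offset i < 𝓗.L i (z + ε • w) ↔ 𝓗.offset i < 𝓗.L i (q + ε • w)) := by
      intro i
      by_cases hiq : 𝓗.L i q = 𝓗.offset i
      · have hq1 := (h1 i).2 hiq (hw1 i hiq)
        by_cases hiA : i ∈ A
        · have hz1 := (h2 i).2 (hzA i hiA) (hw1 i hiq)
          exact ⟨hq1.1, hz1.1, hz1.2.trans hq1.2.symm⟩
        · have hd1 := (hδ1 i).2 hiq (by rw [map_neg]; exact neg_ne_zero.2 (hvne i hiA hiq))
          have hz1 := (h2 i).1 hd1.1
          refine ⟨hq1.1, hz1.1, hz1.2.trans (hd1.2.trans (Iff.trans ?_ hq1.2.symm))⟩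
          have := hw2 i hiA hiq
          rw [map_neg, neg_pos]
          rcases mul_neg_iff.1 this with h | h
          · exact ⟨fun _ => h.1, fun _ => h.2⟩
          · exact ⟨fun h' => absurd h' h.2.not_gt, fun h' => absurd h' h.1.not_gt⟩
      · have hq1 := (h1 i).1 hiq
        have hd1 := (hδ1 i).1 hiq
        have hz1 := (h2 i).1 hd1.1
        exact ⟨hq1.1, hz1.1, hz1.2.trans (hd1.2.trans hq1.2.symm)⟩
    apply hP (z + ε • w) (fun i => (hcomb i).2.1) (q + ε • w) (fun i => (hcomb i).1) _ h3
    ext i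
    rw [mem_P, mem_P]; exact (hcomb i).2.2
  have hmid : ∀ (w : Fin d → ℝ) (ε : ℝ), q + ε • w ∈ T → q + ε • (-w) ∈ T → False := by
    intro w ε h1 h2
    apply hqT
    have := hconv h1 h2 (a := 1/2) (b := 1/2) (by norm_num) (by norm_num) (by norm_num)
    have e : (1/2:ℝ) • (q + ε • w) + (1/2:ℝ) • (q + ε • (-w)) = q := by
      ext j; simp; ring
    rwa [e] at this
  -- existence of f
  have hex : ∃ f, f ∉ A ∧ 𝓗.L f q = 𝓗.offset f := by
    by_contra hcon
    push Not at hcon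
    obtain ⟨w, hw⟩ := 𝓗.solve hgp A hA.le (fun _ => 1)
    have hZ : ∀ i, 𝓗.L i q = 𝓗.offset i → i ∈ A := by
      intro i hi; by_contra h; exact hcon i h hi
    have k1 := key w (fun i hi => by rw [hw i (hZ i hi)]; norm_num)
      (fun f hf hfq => absurd hfq (hcon f hf))
    have k2 := key (-w) (fun i hi => by rw [map_neg, hw i (hZ i hi)]; norm_num)
      (fun f hf hfq => absurd hfq (hcon f hf))
    obtain ⟨ε, h1, h2⟩ := (k1.and k2).exists
    exact hmid w ε h1 h2
  obtain ⟨f, hfA, hfq⟩ := hex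
  have huniq : ∀ g, g ∉ A → 𝓗.L g q = 𝓗.offset g → g = f := by
    intro g hg hgq
    by_contra hgf
    apply hvfg f g hfA hg (Ne.symm hgf)
    rw [← hgq, ← hfq, hLq, hLq]; ring
  have hfv := hvne f hfA hfq
  have hZ : ∀ i, 𝓗.L i q = 𝓗.offset i → i ∈ A ∨ i = f := by
    intro i hi
    by_cases h : i ∈ A
    · exact Or.inl h
    · exact Or.inr (huniq i h hi)
  refine ⟨f, fun hfB => ?_, ?_⟩
  · have := hvB f hfB
    have e : 𝓗.L f p - 𝓗.offset f = - (τ * 𝓗.L f v) := by rw [← hfq, hLq]; ring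
    rw [e] at this
    nlinarith [mul_self_nonneg (𝓗.L f v), mul_nonneg hτ.le (mul_self_nonneg (𝓗.L f v))]
  refine ⟨(𝓗.P q), ?_, ?_⟩
  · rw [Finset.disjoint_left]
    intro a ha haA
    rw [mem_P, hqA a haA] at ha
    exact lt_irrefl _ ha
  intro t htA
  have hcardf : (insert f A).card ≤ d := by rw [Finset.card_insert_of_notMem hfA]; omega
  have hnef : ∀ a ∈ A, a ≠ f := by rintro a ha rfl; exact hfA ha
  obtain ⟨w, hw⟩ := 𝓗.solve hgp (insert f A) hcardf
    (fun i => if i = f then - 𝓗.L f v else if i ∈ t then 1 else -1)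
  obtain ⟨w', hw'⟩ := 𝓗.solve hgp (insert f A) hcardf
    (fun i => if i = f then 𝓗.L f v else if i ∈ t then 1 else -1)
  have hwf : 𝓗.L f w = - 𝓗.L f v := by rw [hw f (by simp)]; simp
  have hwf' : 𝓗.L f w' = 𝓗.L f v := by rw [hw' f (by simp)]; simp
  have hwA : ∀ a ∈ A, 𝓗.L a w = if a ∈ t then 1 else -1 := by
    intro a ha; rw [hw a (by simp [ha]), if_neg (hnef a ha)]
  have hwA' : ∀ a ∈ A, 𝓗.L a w' = if a ∈ t then 1 else -1 := by
    intro a ha; rw [hw' a (by simp [ha]), if_neg (hnef a ha)]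
  have hne : ∀ i, 𝓗.L i q = 𝓗.offset i → 𝓗.L i w ≠ 0 := by
    intro i hi
    rcases hZ i hi with h | rfl
    · rw [hwA i h]; split_ifs <;> norm_num
    · rw [hwf]; exact neg_ne_zero.2 hfv
  have hne' : ∀ i, 𝓗.L i q = 𝓗.offset i → 𝓗.L i w' ≠ 0 := by
    intro i hi
    rcases hZ i hi with h | rfl
    · rw [hwA' i h]; split_ifs <;> norm_num
    · rw [hwf']; exact hfv
  have hsq : 0 < 𝓗.L f v * 𝓗.L f v := mul_self_pos.2 hfv
  have k1 := key w hne (by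
    intro g hg hgq
    rw [huniq g hg hgq, hwf]; linarith)
  have k2 := key (-w') (fun i hi => by rw [map_neg]; exact neg_ne_zero.2 (hne' i hi)) (by
    intro g hg hgq
    rw [huniq g hg hgq, map_neg, hwf']; linarith)
  obtain ⟨ε, h1, h2, h3, h4⟩ := (k1.and (k2.and ((𝓗.near q w).and (𝓗.near q w')))).exists
  have hs : ∀ i, i ≠ f → ∀ u, (∀ i, 𝓗.L i q = 𝓗.offset i → 𝓗.L i u ≠ 0) →
      (∀ a ∈ A, 𝓗.L a u = if a ∈ t then 1 else -1) →
      (𝓗.L i q ≠ 𝓗.offset i → (𝓗.L i (q + ε • u) ≠ 𝓗.offset i ∧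
        (𝓗.offset i < 𝓗.L i (q + ε • u) ↔ 𝓗.offset i < 𝓗.L i q))) ∧
      (𝓗.L i q = 𝓗.offset i → 𝓗.L i u ≠ 0 → (𝓗.L i (q + ε • u) ≠ 𝓗.offset i ∧
        (𝓗.offset i < 𝓗.L i (q + ε • u) ↔ 0 < 𝓗.L i u))) →
      (𝓗.offset i < 𝓗.L i (q + ε • u) ↔ (𝓗.offset i < 𝓗.L i q ∨ i ∈ t)) := by
    intro i hif u hu huA hnear
    by_cases hi : 𝓗.L i q = 𝓗.offset i
    · have hiA : i ∈ A := (hZ i hi).resolve_right hif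
      rw [(hnear.2 hi (hu i hi)).2, huA i hiA, hi]
      by_cases hit : i ∈ t <;> simp [hit]
    · rw [(hnear.1 hi).2]
      have : i ∉ t := fun h => hi (hqA i (htA h))
      simp [this]
  have hfr : ∀ u, (∀ i, 𝓗.L i q = 𝓗.offset i → 𝓗.L i u ≠ 0) → (∀ i,
      (𝓗.L i q ≠ 𝓗.offset i → (𝓗.L i (q + ε • u) ≠ 𝓗.offset i ∧
        (𝓗.offset i < 𝓗.L i (q + ε • u) ↔ 𝓗.offset i < 𝓗.L i q))) ∧
      (𝓗.L i q = 𝓗.offset i → 𝓗.L i u ≠ 0 → (𝓗.L i (q + ε • u) ≠ 𝓗.offset i ∧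
        (𝓗.offset i < 𝓗.L i (q + ε • u) ↔ 0 < 𝓗.L i u)))) → q + ε • u ∈ 𝓗.free := by
    intro u hu hnear i
    by_cases hi : 𝓗.L i q = 𝓗.offset i
    · exact ((hnear i).2 hi (hu i hi)).1
    · exact ((hnear i).1 hi).1
  have hfP : f ∉ 𝓗.P q := by rw [mem_P, hfq]; exact lt_irrefl _
  have hft : f ∉ t := fun h => hfA (htA h)
  simp only [E, Finset.mem_filter, Finset.mem_univ, true_and]
  refine ⟨q + ε • w, q + ε • w', hfr w hne h3, hfr w' hne' h4, h1, fun h => hmid w' ε h h2,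
    ?_, ?_, ?_⟩
  · ext i
    by_cases hif : i = f
    · subst hif; simp [hfP, hft]
    · simp only [Finset.mem_erase, ne_eq, hif, not_false_eq_true, true_and, Finset.mem_union, mem_P]
      exact hs i hif w hne hwA (h3 i)
  · ext i
    by_cases hif : i = f
    · subst hif; simp [hfP, hft]
    · simp only [Finset.mem_erase, ne_eq, hif, not_false_eq_true, true_and, Finset.mem_union, mem_P]
      exact hs i hif w' hne' hwA' (h4 i)
  · rw [mem_P, mem_P, ((h3 f).2 hfq (hne f hfq)).2, ((h4 f).2 hfq (hne' f hfq)).2, hwf, hwf']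
    intro h
    rcases lt_or_gt_of_ne hfv with h' | h'
    · have := h.1 (by linarith); linarith
    · have := h.2 h'; linarith

/-- convex sets meeting all orthants meet the intersection -/
lemma orthant (A : Finset (Fin n)) : ∀ T : Set (Fin d → ℝ), Convex ℝ T →
    (∀ t, t ⊆ A → ∃ x ∈ T, ∀ a ∈ A, (a ∈ t → 𝓗.offset a < 𝓗.L a x) ∧
      (a ∉ t → 𝓗.L a x < 𝓗.offset a)) → ∃ x ∈ T, ∀ a ∈ A, 𝓗.L a x = 𝓗.offset a := by
  classical
  induction A using Finset.induction_on with
  | empty =>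
    intro T _ h
    obtain ⟨x, hx, -⟩ := h ∅ (by simp)
    exact ⟨x, hx, by simp⟩
  | insert i A hi ih =>
    intro T hT h
    have hne : ∀ a ∈ A, a ≠ i := by rintro a ha rfl; exact hi ha
    obtain ⟨x, ⟨hxT, hx1⟩, hx⟩ := ih (T ∩ {x | 𝓗.offset i < 𝓗.L i x})
      (hT.inter (convex_halfSpace_gt (𝓗.L i).isLinear _)) (by
        intro t ht
        obtain ⟨x, hx, hx'⟩ := h (insert i t) (Finset.insert_subset_insert _ ht)
        refine ⟨x, ⟨hx, (hx' i (by simp)).1 (by simp)⟩, fun a ha => ?_⟩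
        have := hx' a (by simp [ha])
        simpa [hne a ha] using this)
    obtain ⟨y, ⟨hyT, hy1⟩, hy⟩ := ih (T ∩ {x | 𝓗.L i x < 𝓗.offset i})
      (hT.inter (convex_halfSpace_lt (𝓗.L i).isLinear _)) (by
        intro t ht
        obtain ⟨x, hx, hx'⟩ := h t (ht.trans (Finset.subset_insert _ _))
        refine ⟨x, ⟨hx, (hx' i (by simp)).2 (fun h => hi (ht h))⟩, fun a ha => ?_⟩
        exact hx' a (by simp [ha]))
    have hx1' : 𝓗.offset i < 𝓗.L i x := hx1
    have hy1' : 𝓗.L i y < 𝓗.offset i := hy1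
    have hpos : 0 < 𝓗.L i x - 𝓗.L i y := by linarith
    set a := (𝓗.offset i - 𝓗.L i y) / (𝓗.L i x - 𝓗.L i y) with ha
    set b := (𝓗.L i x - 𝓗.offset i) / (𝓗.L i x - 𝓗.L i y) with hb
    have hab : a + b = 1 := by rw [ha, hb]; field_simp; ring
    refine ⟨a • x + b • y, hT hxT hyT (div_nonneg (by linarith) hpos.le)
      (div_nonneg (by linarith) hpos.le) hab, ?_⟩
    intro j hj
    rw [map_add, map_smul, map_smul, smul_eq_mul, smul_eq_mul]
    rcases Finset.mem_insert.1 hj with rfl | hj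
    · rw [ha, hb]; field_simp; ring
    · rw [hx j hj, hy j hj, ← add_mul, hab, one_mul]

end Arrangement

namespace Arrangement

variable {d n : ℕ} (𝓗 : Arrangement d n)

def cell (s : Finset (Fin n)) : Set (Fin d → ℝ) := {y | y ∈ 𝓗.free ∧ 𝓗.P y = s}

lemma comp_eq_cell {x : Fin d → ℝ} (hx : x ∈ 𝓗.free) :
    connectedComponentIn 𝓗.free x = 𝓗.cell (𝓗.P x) := by
  ext y
  constructor
  · intro h
    exact ⟨connectedComponentIn_subset _ _ h, 𝓗.P_eq_of_mem hx h⟩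
  · rintro ⟨hy, h⟩
    rw [𝓗.comp_eq_of_P hx hy h.symm]
    exact mem_connectedComponentIn hy

lemma chambers_finite : 𝓗.chambers.Finite := by
  apply (Set.finite_range 𝓗.cell).subset
  rintro C ⟨x, hx, rfl⟩
  exact ⟨_, (𝓗.comp_eq_cell hx).symm⟩

open Classical in
def PS (C : Set (Fin d → ℝ)) : Finset (Fin n) := Finset.univ.filter (fun i => C ⊆ 𝓗.pos i)

lemma PS_comp {x : Fin d → ℝ} (hx : x ∈ 𝓗.free) :
    𝓗.PS (connectedComponentIn 𝓗.free x) = 𝓗.P x := by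
  ext i
  rw [mem_P]
  simp only [PS, Finset.mem_filter, Finset.mem_univ, true_and]
  exact ⟨fun h => h (mem_connectedComponentIn hx), (𝓗.comp_subset hx i).1⟩

lemma separates_iff {x y : Fin d → ℝ} (hx : x ∈ 𝓗.free) (hy : y ∈ 𝓗.free) (e : Fin n) :
    𝓗.Separates e (connectedComponentIn 𝓗.free x) (connectedComponentIn 𝓗.free y) ↔
      ¬ (e ∈ 𝓗.P x ↔ e ∈ 𝓗.P y) := by
  have hmx := mem_connectedComponentIn hx
  have hmy := mem_connectedComponentIn hy
  rw [mem_P, mem_P]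
  constructor
  · rintro (⟨h1, h2⟩ | ⟨h1, h2⟩) h
    · have a : 𝓗.offset e < 𝓗.L e x := h1 hmx
      have b : 𝓗.L e y < 𝓗.offset e := h2 hmy
      exact absurd (h.1 a) b.not_gt
    · have a : 𝓗.L e x < 𝓗.offset e := h1 hmx
      have b : 𝓗.offset e < 𝓗.L e y := h2 hmy
      exact absurd (h.2 b) a.not_gt
  · intro h
    rcases lt_or_gt_of_ne ((𝓗.mem_free x).1 hx e) with h1 | h1
    · rcases lt_or_gt_of_ne ((𝓗.mem_free y).1 hy e) with h2 | h2
      · exact absurd ⟨fun h' => absurd h' h1.not_gt, fun h' => absurd h' h2.not_gt⟩ h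
      · exact Or.inr ⟨(𝓗.comp_subset hx e).2 h1, (𝓗.comp_subset hy e).1 h2⟩
    · rcases lt_or_gt_of_ne ((𝓗.mem_free y).1 hy e) with h2 | h2
      · exact Or.inl ⟨(𝓗.comp_subset hx e).1 h1, (𝓗.comp_subset hy e).2 h2⟩
      · exact absurd ⟨fun _ => h2, fun _ => h1⟩ h

lemma sum_E_le {S : Set (Set (Fin d → ℝ))} (hS : S ⊆ 𝓗.chambers) :
    ∑ f, (𝓗.E (thickening S) f).card ≤ (𝓗.edgeBoundary S).ncard := by
  classical
  have hfin : (𝓗.edgeBoundary S).Finite := by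
    apply (𝓗.chambers_finite.prod 𝓗.chambers_finite).subset
    rintro ⟨C, C'⟩ ⟨-, -, h1, h2, -⟩
    exact ⟨h1, h2⟩
  set g : Set (Fin d → ℝ) × Set (Fin d → ℝ) → Finset (Fin n) × Finset (Fin n) :=
    fun q => (symmDiff (𝓗.PS q.1) (𝓗.PS q.2), 𝓗.PS q.1 ∩ 𝓗.PS q.2) with hg
  set M : Finset (Finset (Fin n) × Finset (Fin n)) :=
    (Finset.univ.sigma (fun f => 𝓗.E (thickening S) f)).image (fun z => ({z.1}, z.2)) with hM
  have hMc : M.card = ∑ f, (𝓗.E (thickening S) f).card := by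
    rw [hM, Finset.card_image_of_injective, Finset.card_sigma]
    rintro ⟨f, s⟩ ⟨f', s'⟩ h
    simp only [Prod.mk.injEq, Finset.singleton_inj] at h
    obtain ⟨rfl, rfl⟩ := h
    rfl
  have hsub : (M : Set (Finset (Fin n) × Finset (Fin n))) ⊆ g '' 𝓗.edgeBoundary S := by
    intro z hz
    rw [Finset.mem_coe, hM, Finset.mem_image] at hz
    obtain ⟨⟨f, s⟩, hfs, rfl⟩ := hz
    simp only [Finset.mem_sigma, Finset.mem_univ, true_and, E, Finset.mem_filter] at hfs
    obtain ⟨x, y, hx, hy, hxT, hyT, h1, h2, h3⟩ := hfs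
    have hiff : ∀ i, i ≠ f → ((i ∈ 𝓗.P x ↔ i ∈ s) ∧ (i ∈ 𝓗.P y ↔ i ∈ s)) := by
      intro i hi
      constructor
      · rw [← h1]; simp [hi]
      · rw [← h2]; simp [hi]
    have hfs : f ∉ s := by rw [← h1]; exact Finset.notMem_erase _ _
    refine ⟨(connectedComponentIn 𝓗.free x, connectedComponentIn 𝓗.free y), ?_, ?_⟩
    · refine ⟨(𝓗.mem_thick hS hx).1 hxT, fun h => hyT ((𝓗.mem_thick hS hy).2 h),
        ⟨x, hx, rfl⟩, ⟨y, hy, rfl⟩, f, (𝓗.separates_iff hx hy f).2 h3, ?_⟩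
      intro e he
      have he := (𝓗.separates_iff hx hy e).1 he
      by_contra hef
      exact he ((hiff e hef).1.trans (hiff e hef).2.symm)
    · simp only [hg, 𝓗.PS_comp hx, 𝓗.PS_comp hy, Prod.mk.injEq]
      constructor
      · ext i
        rw [Finset.mem_symmDiff, Finset.mem_singleton]
        by_cases hi : i = f
        · subst hi; tauto
        · have := hiff i hi; tauto
      · ext i
        rw [Finset.mem_inter]
        by_cases hi : i = f
        · subst hi; tauto
        · have := hiff i hi; tauto
  rw [← hMc, ← Set.ncard_coe_finset]
  exact (Set.ncard_le_ncard hsub (hfin.image g)).trans (Set.ncard_image_le hfin)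

end Arrangement

/-- If moreover the thickening `T_S` of the proper convex set `S` is
bounded, then `|∂S| ≥ ∑_{i=0}^{d-1} (d-i+1)·C(k,i)`. -/
theorem stmt7 {d n : ℕ} (𝓗 : Arrangement d n) (hgp : 𝓗.GeneralPosition)
    (S : Set (Set (Fin d → ℝ))) (hS : S ⊆ 𝓗.chambers)
    (hproper : S ≠ 𝓗.chambers)
    (hconv : Convex ℝ (thickening S))
    (hbdd : Bornology.IsBounded (thickening S))
    (k : ℝ) (hk : (d : ℝ) - 1 ≤ k)
    (hcard : (S.ncard : ℝ) = ∑ i ∈ Finset.range (d + 1), gchoose k i) :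
    (∑ i ∈ Finset.range d, ((d : ℝ) - i + 1) * gchoose k i) ≤
      ((𝓗.edgeBoundary S).ncard : ℝ) := by
  classical
  set T := thickening S with hTdef
  have hTo : IsOpen T := isOpen_interior
  have hP : ∀ x ∈ 𝓗.free, ∀ y ∈ 𝓗.free, 𝓗.P x = 𝓗.P y → x ∈ T → y ∈ T := by
    intro x hx y hy hxy hxT
    rw [hTdef, 𝓗.mem_thick hS hy, ← 𝓗.comp_eq_of_P hx hy hxy]
    exact (𝓗.mem_thick hS hx).1 hxT
  set 𝓤 : Finset (Finset (Fin n)) := Finset.univ.filter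
    (fun A => ∃ x ∈ T, ∀ a ∈ A, 𝓗.L a x = 𝓗.offset a) with hU
  have hlow : ∀ A ∈ 𝓤, ∀ B, B ⊆ A → B ∈ 𝓤 := by
    intro A hA B hB
    simp only [hU, Finset.mem_filter, Finset.mem_univ, true_and] at hA ⊢
    obtain ⟨x, hx, h⟩ := hA
    exact ⟨x, hx, fun a ha => h a (hB ha)⟩
  have hd : ∀ A ∈ 𝓤, A.card ≤ d := by
    intro A hA
    by_contra hcon
    obtain ⟨B, hBA, hB⟩ := Finset.exists_subset_card_eq (show d + 1 ≤ A.card by omega)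
    have hBU := hlow A hA B hBA
    simp only [hU, Finset.mem_filter, Finset.mem_univ, true_and] at hBU
    obtain ⟨x, -, hx⟩ := hBU
    have : x ∈ ⋂ i ∈ B, 𝓗.H i := by
      simp only [Set.mem_iInter]; exact hx
    rw [hgp.2 B hB] at this
    exact this
  set fam : Finset (Finset (Fin n)) := Finset.univ.filter
    (fun s => ∃ x ∈ 𝓗.free, x ∈ T ∧ 𝓗.P x = s) with hfam
  have hSfam : S.ncard ≤ fam.card := by
    have hsub : S ⊆ 𝓗.cell '' (fam : Set (Finset (Fin n))) := by
      intro C hC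
      obtain ⟨x, hx, rfl⟩ := hS hC
      refine ⟨𝓗.P x, ?_, (𝓗.comp_eq_cell hx).symm⟩
      rw [Finset.mem_coe, hfam, Finset.mem_filter]
      exact ⟨Finset.mem_univ _, x, hx, (𝓗.mem_thick hS hx).2 hC, rfl⟩
    rw [← Set.ncard_coe_finset]
    exact (Set.ncard_le_ncard hsub (fam.finite_toSet.image _)).trans
      (Set.ncard_image_le fam.finite_toSet)
  have hfamU : fam.card ≤ 𝓤.card := by
    refine (Finset.card_le_card_shatterer fam).trans (Finset.card_le_card ?_)
    intro A hA
    rw [Finset.mem_shatterer] at hA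
    simp only [hU, Finset.mem_filter, Finset.mem_univ, true_and]
    apply 𝓗.orthant A T hconv
    intro t ht
    obtain ⟨u, hu, hut⟩ := hA ht
    simp only [hfam, Finset.mem_filter, Finset.mem_univ, true_and] at hu
    obtain ⟨x, hx, hxT, rfl⟩ := hu
    refine ⟨x, hxT, fun a ha => ⟨fun hat => ?_, fun hat => ?_⟩⟩
    · rw [← hut, Finset.mem_inter, 𝓗.mem_P] at hat
      exact hat.2
    · rw [← hut, Finset.mem_inter, 𝓗.mem_P] at hat
      exact lt_of_le_of_ne (not_lt.1 fun h => hat ⟨ha, h⟩) ((𝓗.mem_free x).1 hx a)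
  have hcard' : ∑ i ∈ Finset.range (d + 1), gchoose k i ≤ (𝓤.card : ℝ) := by
    rw [← hcard]; exact_mod_cast hSfam.trans hfamU
  have hpos : 0 < 𝓤.card := by
    have h1 : (0:ℝ) < ∑ i ∈ Finset.range (d + 1), gchoose k i := by
      rw [Finset.sum_range_succ']
      have : 0 ≤ ∑ i ∈ Finset.range d, gchoose k (i+1) := by
        apply Finset.sum_nonneg
        intro i hi
        have hi' : i + 1 ≤ d := by simpa using hi
        have hi'' : (i:ℝ) + 1 ≤ d := by exact_mod_cast hi'
        apply gchoose_nonneg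
        push_cast; linarith
      rw [gchoose_zero]; linarith
    exact_mod_cast h1.trans_le hcard'
  have hne : ∅ ∈ 𝓤 := by
    obtain ⟨A, hA⟩ := Finset.card_pos.1 hpos
    exact hlow A hA ∅ (by simp)
  refine (final_comb 𝓤 hlow hd hne k hk hcard').trans ?_
  set 𝓥 := 𝓤.filter (fun A => A.card < d) with hV
  have hgood : ∀ A ∈ 𝓥, (d:ℝ) - A.card + 1 ≤
      ((Finset.univ.filter (fun f => 𝓗.Good T f A)).card : ℝ) := by
    intro A hA
    rw [hV, Finset.mem_filter] at hA
    obtain ⟨hAU, hAd⟩ := hA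
    simp only [hU, Finset.mem_filter, Finset.mem_univ, true_and] at hAU
    obtain ⟨p0, hp0, hp0A⟩ := hAU
    set B := Finset.univ.filter (fun f => 𝓗.Good T f A) with hB
    have : d + 1 ≤ B.card + A.card := by
      by_contra hcon
      obtain ⟨f, hfB, hf⟩ := 𝓗.exit_good hgp T hTo hconv hbdd hP A B hAd (by omega) (by
        rw [Finset.disjoint_right]
        intro f hf
        exact Arrangement.Good.notMem 𝓗 (Finset.mem_filter.1 hf).2) p0 hp0 hp0A
      exact hfB (Finset.mem_filter.2 ⟨Finset.mem_univ _, hf⟩)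
    have : (d:ℝ) + 1 ≤ B.card + A.card := by exact_mod_cast this
    linarith
  refine (Finset.sum_le_sum hgood).trans ?_
  have hdc : ∑ A ∈ 𝓥, (Finset.univ.filter (fun f => 𝓗.Good T f A)).card
      = ∑ f, (𝓥.filter (fun A => 𝓗.Good T f A)).card := by
    simp only [Finset.card_filter]
    exact Finset.sum_comm
  have hEf : ∀ f ∈ Finset.univ, (𝓥.filter (fun A => 𝓗.Good T f A)).card ≤ (𝓗.E T f).card := by
    intro f _
    apply strong_shatter
    intro A hA
    exact (Finset.mem_filter.1 hA).2
  have := (hdc.le.trans (Finset.sum_le_sum hEf)).trans (𝓗.sum_E_le hS)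
  exact_mod_cast this
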